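/- arXiv:math/9902031 — 2 statements merged into one kernel-verified Lean document; each statement's English description precedes it below -/
import Mathlib

section
/- Let k be a field and let q ∈ k be nonzero. In the matrix algebra M_2(GL_q(2,-2)), the matrix z = [[z11, z12], [z21, z22]] is invertible with inverse [[z22τ, qτz12], [q^{-1}z21τ, τz11]]; that is, both products of z with this matrix equal the identity matrix. -/
/-- The five generators `z11, z12, z21, z22, τ` of the algebra `GL_q(2,-2)`. -/
inductive ZGen : Type
  | z11 | z12 | z21 | z22 | tau

def Zf (k : Type) [Field k] : ZGen → FreeAlgebra k ZGen := FreeAlgebra.ι k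

/-- The defining relations of `GL_q(2,-2)`. -/
inductive GLq22Rel (k : Type) [Field k] (q : k) :
    FreeAlgebra k ZGen → FreeAlgebra k ZGen → Prop
  | r1 : GLq22Rel k q (Zf k .z12 * Zf k .z11) (-(q • (Zf k .z11 * Zf k .z12)))
  | r2 : GLq22Rel k q (Zf k .z21 * Zf k .z11) (q • (Zf k .z11 * Zf k .z21))
  | r3 : GLq22Rel k q (Zf k .z22 * Zf k .z12) (q • (Zf k .z12 * Zf k .z22))
  | r4 : GLq22Rel k q (Zf k .z22 * Zf k .z21) (-(q • (Zf k .z21 * Zf k .z22)))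
  | r5 : GLq22Rel k q (Zf k .z12 * Zf k .z21) (-(Zf k .z21 * Zf k .z12))
  | r6 : GLq22Rel k q (Zf k .z11 * Zf k .z22 + Zf k .z22 * Zf k .z11)
      ((q - q⁻¹) • (Zf k .z12 * Zf k .z21))
  | r7 : GLq22Rel k q (Zf k .z11 * Zf k .tau) (-(Zf k .tau * Zf k .z11))
  | r8 : GLq22Rel k q (Zf k .z22 * Zf k .tau) (-(Zf k .tau * Zf k .z22))
  | r9 : GLq22Rel k q (Zf k .z12 * Zf k .tau) (-(Zf k .tau * Zf k .z12))
  | r10 : GLq22Rel k q (Zf k .z21 * Zf k .tau) (-(Zf k .tau * Zf k .z21))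
  | r11 : GLq22Rel k q ((Zf k .z11 * Zf k .z22 + q⁻¹ • (Zf k .z12 * Zf k .z21)) * Zf k .tau) 1

/-- The algebra `GL_q(2,-2)`. -/
abbrev GLq22 (k : Type) [Field k] (q : k) := RingQuot (GLq22Rel k q)

noncomputable section

/-- The generating matrix entries `z_{ij}` of `GL_q(2,-2)`. -/
def zM (k : Type) [Field k] (q : k) : Fin 2 → Fin 2 → GLq22 k q :=
  ![![RingQuot.mkAlgHom k (GLq22Rel k q) (Zf k .z11),
     RingQuot.mkAlgHom k (GLq22Rel k q) (Zf k .z12)],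
    ![RingQuot.mkAlgHom k (GLq22Rel k q) (Zf k .z21),
     RingQuot.mkAlgHom k (GLq22Rel k q) (Zf k .z22)]]

/-- The element `τ` of `GL_q(2,-2)`. -/
def tauE (k : Type) [Field k] (q : k) : GLq22 k q :=
  RingQuot.mkAlgHom k (GLq22Rel k q) (Zf k .tau)

/-!
A two-sided adjugate exists for `z` before `τ` is introduced: the quadratic relations give
`z * adj z = δ` and `adj z * z = -δ`, where `δ = z11 z22 + q⁻¹ z12 z21`. Since `τ` anticommutes with
every `z_{ij}`, it commutes with the quadratic element `δ`, so `δ τ = 1` also reads `τ δ = 1`, and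
moving `τ` across `adj z` costs a sign that cancels the one in `adj z * z = -δ`. Hence `adj z * τ`
is a two-sided inverse of `z`.
-/

section QuantumMatrix

variable {K A : Type*} [CommRing K] [Ring A] [Algebra K A] {q : Kˣ}
  {z : Matrix (Fin 2) (Fin 2) A} {t : A}

/-- The six quadratic relations among the `z_{ij}` in `GL_q(2,-2)`, for the entries of a matrix over
any algebra. The parameter is a unit, and indices start at `0`, so `z 0 1` is `z12`. -/
structure IsQuantumMatrix (q : Kˣ) (z : Matrix (Fin 2) (Fin 2) A) : Prop where
  row_zero : z 0 1 * z 0 0 = -(q • (z 0 0 * z 0 1))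
  row_one : z 1 1 * z 1 0 = -(q • (z 1 0 * z 1 1))
  col_zero : z 1 0 * z 0 0 = q • (z 0 0 * z 1 0)
  col_one : z 1 1 * z 0 1 = q • (z 0 1 * z 1 1)
  antidiag : z 0 1 * z 1 0 = -(z 1 0 * z 0 1)
  diag : z 0 0 * z 1 1 + z 1 1 * z 0 0 = ((q : K) - (q⁻¹ : Kˣ)) • (z 0 1 * z 1 0)

/-- The quantum determinant of a `2 × 2` matrix: in `GL_q(2,-2)` it is the element inverted
by `τ`. -/
def quantumDet (q : Kˣ) (z : Matrix (Fin 2) (Fin 2) A) : A :=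
  z 0 0 * z 1 1 + q⁻¹ • (z 0 1 * z 1 0)

/-- The quantum adjugate of a `2 × 2` matrix. The sign is normalized so that it is a right adjugate
of a quantum matrix; as a left adjugate it produces minus the quantum determinant. -/
def quantumAdjugate (q : Kˣ) (z : Matrix (Fin 2) (Fin 2) A) : Matrix (Fin 2) (Fin 2) A :=
  !![z 1 1, -(q • z 0 1); q⁻¹ • z 1 0, -z 0 0]

namespace IsQuantumMatrix

theorem smul_antidiag_sub_diag (h : IsQuantumMatrix q z) :
    q • (z 0 1 * z 1 0) - z 1 1 * z 0 0 = quantumDet q z := by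
  have hdiag := h.diag
  rw [sub_smul, ← Units.smul_def, ← Units.smul_def] at hdiag
  rw [quantumDet, sub_eq_iff_eq_add, add_right_comm, hdiag, sub_add_cancel]

theorem mul_quantumAdjugate (h : IsQuantumMatrix q z) :
    z * quantumAdjugate q z = Matrix.scalar (Fin 2) (quantumDet q z) := by
  have h00 : z 0 0 * z 1 1 + z 0 1 * (q⁻¹ • z 1 0) = quantumDet q z := by
    rw [mul_smul_comm, quantumDet]
  have h01 : z 0 0 * -(q • z 0 1) + z 0 1 * -z 0 0 = 0 := by
    rw [mul_neg, mul_neg, mul_smul_comm, h.row_zero, neg_neg, neg_add_cancel]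
  have h10 : z 1 0 * z 1 1 + z 1 1 * (q⁻¹ • z 1 0) = 0 := by
    rw [mul_smul_comm, h.row_one, smul_neg, inv_smul_smul, add_neg_cancel]
  have h11 : z 1 0 * -(q • z 0 1) + z 1 1 * -z 0 0 = quantumDet q z := by
    rw [mul_neg, mul_neg, mul_smul_comm, ← smul_neg, ← h.antidiag, ← sub_eq_add_neg,
      h.smul_antidiag_sub_diag]
  ext i j
  fin_cases i <;> fin_cases j
  · simpa [quantumAdjugate, Matrix.mul_apply] using h00
  · simpa [quantumAdjugate, Matrix.mul_apply] using h01
  · simpa [quantumAdjugate, Matrix.mul_apply] using h10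
  · simpa [quantumAdjugate, Matrix.mul_apply] using h11

theorem quantumAdjugate_mul (h : IsQuantumMatrix q z) :
    quantumAdjugate q z * z = -Matrix.scalar (Fin 2) (quantumDet q z) := by
  have h00 : z 1 1 * z 0 0 + -(q • z 0 1) * z 1 0 = -quantumDet q z := by
    rw [← h.smul_antidiag_sub_diag, neg_sub, neg_mul, smul_mul_assoc, sub_eq_add_neg]
  have h01 : z 1 1 * z 0 1 + -(q • z 0 1) * z 1 1 = 0 := by
    rw [neg_mul, smul_mul_assoc, h.col_one, add_neg_cancel]
  have h10 : (q⁻¹ • z 1 0) * z 0 0 + -z 0 0 * z 1 0 = 0 := by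
    rw [smul_mul_assoc, h.col_zero, inv_smul_smul, neg_mul, add_neg_cancel]
  have h11 : (q⁻¹ • z 1 0) * z 0 1 + -z 0 0 * z 1 1 = -quantumDet q z := by
    rw [quantumDet, h.antidiag, smul_mul_assoc, smul_neg, neg_add, neg_neg, neg_mul, add_comm]
  ext i j
  fin_cases i <;> fin_cases j
  · simpa [quantumAdjugate, Matrix.mul_apply] using h00
  · simpa [quantumAdjugate, Matrix.mul_apply] using h01
  · simpa [quantumAdjugate, Matrix.mul_apply] using h10
  · simpa [quantumAdjugate, Matrix.mul_apply] using h11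

end IsQuantumMatrix

theorem commute_quantumDet_of_anticommute (q : Kˣ)
    (ht : ∀ i j, z i j * t = -(t * z i j)) : Commute t (quantumDet q z) := by
  have hmul : ∀ i j i' j', Commute t (z i j * z i' j') := fun i j i' j' ↦ by
    rw [commute_iff_eq, mul_assoc, ht i' j', mul_neg, ← mul_assoc, ← mul_assoc, ht i j, neg_mul,
      neg_neg]
  exact (hmul 0 0 1 1).add_right ((hmul 0 1 1 0).smul_right q⁻¹)

theorem quantumAdjugate_mul_scalar_of_anticommute (q : Kˣ)
    (ht : ∀ i j, z i j * t = -(t * z i j)) :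
    quantumAdjugate q z * Matrix.scalar (Fin 2) t =
      -(Matrix.scalar (Fin 2) t * quantumAdjugate q z) := by
  ext i j
  fin_cases i <;> fin_cases j <;> simp [quantumAdjugate, ht, smul_mul_assoc, mul_smul_comm]

theorem quantumAdjugate_mul_scalar_eq_of_anticommute (q : Kˣ)
    (ht : ∀ i j, z i j * t = -(t * z i j)) :
    quantumAdjugate q z * Matrix.scalar (Fin 2) t =
      !![z 1 1 * t, q • (t * z 0 1); q⁻¹ • (z 1 0 * t), t * z 0 0] := by
  ext i j
  fin_cases i <;> fin_cases j <;> simp [quantumAdjugate, ht, smul_mul_assoc]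

namespace IsQuantumMatrix

theorem mul_quantumAdjugate_mul_scalar_eq_one (h : IsQuantumMatrix q z)
    (hdet : quantumDet q z * t = 1) :
    z * (quantumAdjugate q z * Matrix.scalar (Fin 2) t) = 1 := by
  rw [← mul_assoc, h.mul_quantumAdjugate, ← map_mul, hdet, map_one]

theorem quantumAdjugate_mul_scalar_mul_eq_one (h : IsQuantumMatrix q z)
    (ht : ∀ i j, z i j * t = -(t * z i j)) (hdet : quantumDet q z * t = 1) :
    quantumAdjugate q z * Matrix.scalar (Fin 2) t * z = 1 := by
  rw [quantumAdjugate_mul_scalar_of_anticommute q ht, neg_mul, mul_assoc, h.quantumAdjugate_mul,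
    mul_neg, neg_neg, ← map_mul, (commute_quantumDet_of_anticommute q ht).eq, hdet, map_one]

end IsQuantumMatrix

end QuantumMatrix

section Generators

variable {k : Type} [Field k] {q : k}

theorem isQuantumMatrix_zM (hq : q ≠ 0) :
    IsQuantumMatrix (Units.mk0 q hq) (Matrix.of (zM k q)) where
  row_zero := by simpa [zM, Units.smul_def] using RingQuot.mkAlgHom_rel k (GLq22Rel.r1 (q := q))
  row_one := by simpa [zM, Units.smul_def] using RingQuot.mkAlgHom_rel k (GLq22Rel.r4 (q := q))
  col_zero := by simpa [zM, Units.smul_def] using RingQuot.mkAlgHom_rel k (GLq22Rel.r2 (q := q))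
  col_one := by simpa [zM, Units.smul_def] using RingQuot.mkAlgHom_rel k (GLq22Rel.r3 (q := q))
  antidiag := by simpa [zM] using RingQuot.mkAlgHom_rel k (GLq22Rel.r5 (q := q))
  diag := by simpa [zM] using RingQuot.mkAlgHom_rel k (GLq22Rel.r6 (q := q))

theorem zM_anticommute_tauE (i j : Fin 2) :
    zM k q i j * tauE k q = -(tauE k q * zM k q i j) := by
  fin_cases i <;> fin_cases j
  · simpa [zM, tauE] using RingQuot.mkAlgHom_rel k (GLq22Rel.r7 (q := q))
  · simpa [zM, tauE] using RingQuot.mkAlgHom_rel k (GLq22Rel.r9 (q := q))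
  · simpa [zM, tauE] using RingQuot.mkAlgHom_rel k (GLq22Rel.r10 (q := q))
  · simpa [zM, tauE] using RingQuot.mkAlgHom_rel k (GLq22Rel.r8 (q := q))

theorem quantumDet_zM_mul_tauE (hq : q ≠ 0) :
    quantumDet (Units.mk0 q hq) (Matrix.of (zM k q)) * tauE k q = 1 := by
  simpa [quantumDet, zM, tauE, Units.smul_def] using RingQuot.mkAlgHom_rel k (GLq22Rel.r11 (q := q))

end Generators

/-- In `M_2(GL_q(2,-2))`, the matrix `z = [[z11, z12], [z21, z22]]` is invertible
with inverse `[[z22·τ, q·τ·z12], [q⁻¹·z21·τ, τ·z11]]`: both products equal the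
identity matrix. -/
theorem GLq22_matrix_invertible (k : Type) [Field k] (q : k) (hq : q ≠ 0) :
    let z : Matrix (Fin 2) (Fin 2) (GLq22 k q) :=
      !![zM k q 0 0, zM k q 0 1; zM k q 1 0, zM k q 1 1]
    let w : Matrix (Fin 2) (Fin 2) (GLq22 k q) :=
      !![zM k q 1 1 * tauE k q, q • (tauE k q * zM k q 0 1);
         q⁻¹ • (zM k q 1 0 * tauE k q), tauE k q * zM k q 0 0]
    z * w = 1 ∧ w * z = 1 := by
  intro z w
  have hquantum := isQuantumMatrix_zM hq
  have hdet := quantumDet_zM_mul_tauE hq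
  have hz : z = Matrix.of (zM k q) := (Matrix.eta_fin_two (Matrix.of (zM k q))).symm
  have hw : w = quantumAdjugate (Units.mk0 q hq) (Matrix.of (zM k q)) *
      Matrix.scalar (Fin 2) (tauE k q) := by
    rw [quantumAdjugate_mul_scalar_eq_of_anticommute (z := Matrix.of (zM k q)) _
      zM_anticommute_tauE]
    simp only [w, Matrix.of_apply, Units.smul_def, Units.val_inv_eq_inv_val, Units.val_mk0]
  rw [hz, hw]
  exact ⟨hquantum.mul_quantumAdjugate_mul_scalar_eq_one hdet,
    hquantum.quantumAdjugate_mul_scalar_mul_eq_one zM_anticommute_tauE hdet⟩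

end
end

section
/- Let A be a Hopf *-algebra over ℂ admitting a Haar measure J : A → ℂ that is positive and faithful (J(a*a) ≥ 0 for all a, and J(a*a) > 0 whenever a ≠ 0) [equivalently, A is a unitarizable Hopf *-algebra]. Let Z be an A-*-Galois extension endowed with a positive Haar measure. Then (i) there exists a C*-norm on Z, and (ii) for every z ∈ Z the supremum sup{p(z) : p a C*-seminorm on Z} is finite, and the map z ↦ sup{p(z) : p a C*-seminorm on Z} is itself a C*-norm on Z. -/
open TensorProduct ComplexOrder

/-- A C*-seminorm on a complex *-algebra: a seminorm `p` with
`p(xy) ≤ p(x)p(y)` and `p(x*x) = p(x)²`. -/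
def IsCstarSeminorm {Z : Type*} [Ring Z] [Algebra ℂ Z] [StarRing Z] (p : Z → ℝ) : Prop :=
  (∀ x : Z, 0 ≤ p x) ∧ (∀ (c : ℂ) (x : Z), p (c • x) = ‖c‖ * p x) ∧
  (∀ x y : Z, p (x + y) ≤ p x + p y) ∧ (∀ x y : Z, p (x * y) ≤ p x * p y) ∧
  (∀ x : Z, p (star x * x) = p x ^ 2)

/-- A C*-norm: a C*-seminorm which is a norm. -/
def IsCstarNorm {Z : Type*} [Ring Z] [Algebra ℂ Z] [StarRing Z] (p : Z → ℝ) : Prop :=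
  IsCstarSeminorm p ∧ ∀ x : Z, p x = 0 → x = 0

/-!
Every `z : Z` lies in a finite-dimensional subcomodule. Stars of a basis of it that is orthonormal
for the Haar measure `μ` transform under a matrix corepresentation `W`; invariance of `μ` gives
`W W* = 1`, and the antipode turns this into `W* W = 1`. Hence `∑ yᵢ* yᵢ` is coinvariant for such a
family `y`, and coinvariants of a Galois extension are scalars. So `Z` is spanned by elements `y`
for which `c - y* y` is a sum of hermitian squares for some scalar `c`. These are bounded in every
C*-seminorm, whence the suprema are finite, and act as bounded operators by left multiplication for
the inner product `μ(x* y)`, which is definite because the Galois map transports the faithfulness of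
`J` to `μ`. The operator norm of this action is a C*-norm.
-/

theorem ringHom_eq_starRingEnd_of_mul_self_im_eq_zero {φ : ℂ →+* ℂ}
    (h : ∀ c, (φ c * c).im = 0) : φ = starRingEnd ℂ := by
  have polar (c d : ℂ) : (φ c * d + φ d * c).im = 0 := by
    have hcd := h (c + d)
    simp only [map_add, add_mul, mul_add, Complex.add_im] at hcd h ⊢
    linarith [h c, h d]
  have him (d : ℂ) : (φ d).im = -d.im := by
    have := polar 1 d
    simp only [map_one, one_mul, mul_one, Complex.add_im] at this
    linarith
  have hI : φ Complex.I = -Complex.I := by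
    have hsq : φ Complex.I * φ Complex.I = -1 := by
      rw [← map_mul, Complex.I_mul_I, map_neg, map_one]
    have hre := congrArg Complex.im hsq
    simp only [Complex.mul_im, him, Complex.I_im, Complex.neg_im, Complex.one_im] at hre
    refine Complex.ext ?_ (him _)
    simp only [Complex.neg_re, Complex.I_re]
    linarith
  have hre (d : ℂ) : (φ d).re = d.re := by
    have := polar Complex.I d
    simp only [hI, Complex.add_im, Complex.mul_im, Complex.neg_re, Complex.neg_im, Complex.I_re,
      Complex.I_im, mul_zero, mul_one] at this
    linarith
  exact RingHom.ext fun d => Complex.ext (hre d) (him d)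

section StarModule

variable {A Z : Type*} [Ring A] [Algebra ℂ A] [StarRing A]

-- `c • 1 ⊗ 1 = 1 ⊗ c • 1` makes `star (c • 1)` a scalar `φ c`, where `φ` is a ring endomorphism
-- of `ℂ`, and positivity of the state leaves complex conjugation as the only candidate.
theorem starModule_of_star_tmul_self (S : A ⊗[ℂ] A → A ⊗[ℂ] A)
    (hS : ∀ a b : A, S (a ⊗ₜ[ℂ] b) = star a ⊗ₜ[ℂ] star b)
    (φ : A →ₗ[ℂ] ℂ) (hφ1 : φ 1 = 1) (hφ : ∀ a : A, 0 ≤ φ (star a * a)) : StarModule ℂ A := by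
  have hscalar (c : ℂ) : star (c • (1 : A)) = φ (star (c • (1 : A))) • (1 : A) := by
    have h : S ((c • (1 : A)) ⊗ₜ[ℂ] (1 : A)) = S ((1 : A) ⊗ₜ[ℂ] (c • (1 : A))) := by
      rw [TensorProduct.smul_tmul]
    rw [hS, hS, star_one] at h
    simpa [hφ1] using (congrArg (fun t => TensorProduct.lid ℂ A (φ.rTensor A t)) h).symm
  have hsmul (c : ℂ) (a : A) : star (c • a) = φ (star (c • (1 : A))) • star a := by
    rw [← smul_one_mul c a, star_mul, hscalar c]
    simp [hφ1]
  let ψ : ℂ →+* ℂ :=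
    { toFun := fun c => φ (star (c • (1 : A)))
      map_one' := by rw [one_smul, star_one, hφ1]
      map_zero' := by rw [zero_smul, star_zero, map_zero]
      map_add' := fun c d => by rw [add_smul, star_add, map_add]
      map_mul' := fun c d => by rw [mul_smul, hsmul, map_smul, smul_eq_mul] }
  have hψ : ψ = starRingEnd ℂ := ringHom_eq_starRingEnd_of_mul_self_im_eq_zero fun c => by
    have := (hφ (c • 1)).2
    rw [hscalar c] at this
    simpa [ψ, hφ1, mul_comm] using this.symm
  exact ⟨fun c a => (hsmul c a).trans (congrArg (· • star a) (RingHom.congr_fun hψ c))⟩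

theorem starModule_of_star_tmul [StarModule ℂ A] [Ring Z] [Algebra ℂ Z] [StarRing Z]
    (S : A ⊗[ℂ] Z → A ⊗[ℂ] Z)
    (hS : ∀ (a : A) (z : Z), S (a ⊗ₜ[ℂ] z) = star a ⊗ₜ[ℂ] star z)
    (φ : A →ₗ[ℂ] ℂ) (hφ1 : φ 1 = 1) : StarModule ℂ Z where
  star_smul c z := by
    have h : S ((1 : A) ⊗ₜ[ℂ] (c • z)) = S ((c • (1 : A)) ⊗ₜ[ℂ] z) := by
      rw [TensorProduct.smul_tmul]
    rw [hS, hS, star_smul c (1 : A), star_one] at h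
    simpa [hφ1] using congrArg (fun t => TensorProduct.lid ℂ Z (φ.rTensor Z t)) h

theorem eq_star_of_star_tmul [StarModule ℂ A] [Ring Z] [Algebra ℂ Z] [StarRing Z] [StarModule ℂ Z]
    (S : A ⊗[ℂ] Z → A ⊗[ℂ] Z) (hadd : ∀ u v, S (u + v) = S u + S v)
    (hS : ∀ (a : A) (z : Z), S (a ⊗ₜ[ℂ] z) = star a ⊗ₜ[ℂ] star z) (t : A ⊗[ℂ] Z) :
    S t = star t := by
  induction t using TensorProduct.induction_on with
  | zero => simpa using hadd 0 0
  | tmul a z => rw [hS, TensorProduct.star_tmul]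
  | add u v hu hv => rw [hadd, hu, hv, star_add]

end StarModule

section CstarSeminorm

variable {B : Type*} [Ring B] [Algebra ℂ B] [StarRing B] {p : B → ℝ}

theorem le_star_of_sq_le {R : Type*} [Mul R] [Star R] {p : R → ℝ} (hnonneg : ∀ x, 0 ≤ p x)
    (hmul : ∀ x y, p (x * y) ≤ p x * p y) (hsq : ∀ x, p x ^ 2 ≤ p (star x * x)) (x : R) :
    p x ≤ p (star x) := by
  rcases (hnonneg x).eq_or_lt with h | h
  · rw [← h]
    exact hnonneg _
  · refine le_of_mul_le_mul_right ?_ h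
    rw [← sq]
    exact (hsq x).trans (hmul _ _)

namespace IsCstarSeminorm

theorem map_star (hp : IsCstarSeminorm p) (x : B) : p (star x) = p x := by
  obtain ⟨hnonneg, -, -, hmul, hstar⟩ := hp
  have hle := le_star_of_sq_le hnonneg hmul fun y => (hstar y).ge
  exact le_antisymm (by simpa only [star_star] using hle (star x)) (hle x)

/-- A C*-seminorm as a bundled seminorm of Mathlib. -/
noncomputable def toSeminorm (hp : IsCstarSeminorm p) : Seminorm ℂ B :=
  Seminorm.of p hp.2.2.1 hp.2.1

/-- A C*-seminorm as a bundled ring seminorm of Mathlib. -/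
def toRingSeminorm (hp : IsCstarSeminorm p) : RingSeminorm B where
  toFun := p
  map_zero' := map_zero hp.toSeminorm
  add_le' := hp.2.2.1
  neg' := map_neg_eq_map hp.toSeminorm
  mul_le' := hp.2.2.2.1

end IsCstarSeminorm

open scoped Pointwise in
theorem isCstarSeminorm_sSup {P : Set (B → ℝ)} (hP : ∀ p ∈ P, IsCstarSeminorm p)
    (hbdd : ∀ x, BddAbove ((fun p : B → ℝ => p x) '' P)) :
    IsCstarSeminorm fun x => sSup ((fun p : B → ℝ => p x) '' P) := by
  set s : B → ℝ := fun x => sSup ((fun p : B → ℝ => p x) '' P)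
  have hle {p} (hp : p ∈ P) (x : B) : p x ≤ s x := le_csSup (hbdd x) ⟨p, hp, rfl⟩
  have hsup {x : B} {C : ℝ} (hC : 0 ≤ C) (h : ∀ p ∈ P, p x ≤ C) : s x ≤ C :=
    Real.sSup_le (Set.forall_mem_image.mpr h) hC
  have hnonneg (x : B) : 0 ≤ s x :=
    Real.sSup_nonneg (Set.forall_mem_image.mpr fun p hp => (hP p hp).1 x)
  refine ⟨hnonneg, fun c x => ?_, fun x y => ?_, fun x y => ?_, fun x => ?_⟩
  · have himage : (fun p : B → ℝ => p (c • x)) '' P = ‖c‖ • (fun p : B → ℝ => p x) '' P := by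
      rw [← Set.image_smul, Set.image_image]
      exact Set.image_congr fun p hp => (hP p hp).2.1 c x
    exact (congrArg _ himage).trans (Real.sSup_smul_of_nonneg (norm_nonneg c) _)
  · exact hsup (add_nonneg (hnonneg x) (hnonneg y)) fun p hp =>
      ((hP p hp).2.2.1 x y).trans (add_le_add (hle hp x) (hle hp y))
  · exact hsup (mul_nonneg (hnonneg x) (hnonneg y)) fun p hp => ((hP p hp).2.2.2.1 x y).trans
      (mul_le_mul (hle hp x) (hle hp y) ((hP p hp).1 y) (hnonneg x))
  · refine le_antisymm (hsup (sq_nonneg _) fun p hp => ?_) ?_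
    · rw [(hP p hp).2.2.2.2]
      exact pow_le_pow_left₀ ((hP p hp).1 x) (hle hp x) 2
    · rw [← Real.le_sqrt (hnonneg _) (hnonneg _)]
      refine hsup (Real.sqrt_nonneg _) fun p hp => Real.le_sqrt_of_sq_le ?_
      rw [← (hP p hp).2.2.2.2]
      exact hle hp _

theorem isCstarNorm_sSup (hN : ∃ N : B → ℝ, IsCstarNorm N)
    (hbdd : ∀ x : B, BddAbove ((fun p : B → ℝ => p x) '' {p | IsCstarSeminorm p})) :
    IsCstarNorm fun x : B => sSup ((fun p : B → ℝ => p x) '' {p | IsCstarSeminorm p}) := by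
  obtain ⟨N, hN, hdef⟩ := hN
  exact ⟨isCstarSeminorm_sSup (fun p hp => hp) hbdd, fun x hx =>
    hdef x (le_antisymm ((le_csSup (hbdd x) ⟨N, hN, rfl⟩).trans_eq hx) (hN.1 x))⟩

end CstarSeminorm

section Completion

open UniformSpace

universe u

variable {B : Type u} [SeminormedRing B] [StarRing B] [NormedStarGroup B]

theorem uniformContinuous_star_of_normedStarGroup : UniformContinuous (star : B → B) :=
  (starNormedAddGroupHom : NormedAddGroupHom B B).uniformContinuous

/-- The star of the completion of a seminormed *-ring, extended by continuity. -/
@[reducible] noncomputable def completionStarRing : StarRing (Completion B) where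
  star := Completion.map star
  star_involutive := by
    refine fun x => Completion.induction_on x (isClosed_eq (by fun_prop) continuous_id) fun a => ?_
    simp only [Completion.map_coe uniformContinuous_star_of_normedStarGroup, star_star]
  star_mul x y := by
    induction x, y using Completion.induction_on₂ with
    | hp => exact isClosed_eq (by fun_prop) (by fun_prop)
    | ih a b =>
      simp only [← Completion.coe_mul, star_mul,
        Completion.map_coe uniformContinuous_star_of_normedStarGroup]
  star_add x y := by
    induction x, y using Completion.induction_on₂ with
    | hp => exact isClosed_eq (by fun_prop) (by fun_prop)
    | ih a b =>
      simp only [← Completion.coe_add, star_add,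
        Completion.map_coe uniformContinuous_star_of_normedStarGroup]

attribute [local instance] completionStarRing

theorem star_coe_completion (a : B) : star (a : Completion B) = (star a : B) :=
  Completion.map_coe uniformContinuous_star_of_normedStarGroup a

theorem continuous_star_completion : Continuous (star : Completion B → Completion B) :=
  Completion.continuous_map

variable [NormedAlgebra ℂ B] [StarModule ℂ B]

/-- The C*-algebra obtained by completing a *-algebra for a C*-seminorm. -/
@[reducible] noncomputable def completionCStarAlgebra (h : ∀ a : B, ‖star a * a‖ = ‖a‖ ^ 2) :
    CStarAlgebra (Completion B) where
  complete := (inferInstance : CompleteSpace (Completion B)).complete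
  norm_smul_le := norm_smul_le
  norm_mul_self_le x := by
    have hcont := continuous_star_completion (B := B)
    induction x using Completion.induction_on with
    | hp => exact isClosed_le (by fun_prop) (by fun_prop)
    | ih a =>
      rw [star_coe_completion, ← Completion.coe_mul, Completion.norm_coe, Completion.norm_coe, h,
        sq]
  star_smul c x := by
    have hcont := continuous_star_completion (B := B)
    induction x using Completion.induction_on with
    | hp => exact isClosed_eq (hcont.comp (continuous_const_smul c)) (hcont.const_smul (star c))
    | ih a =>
      rw [← Completion.coe_smul, star_coe_completion, star_coe_completion, ← Completion.coe_smul,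
        star_smul]

theorem exists_starAlgHom_norm_eq_norm (h : ∀ a : B, ‖star a * a‖ = ‖a‖ ^ 2) :
    ∃ (D : Type u) (_ : CStarAlgebra D) (π : B →⋆ₐ[ℂ] D), ∀ a, ‖π a‖ = ‖a‖ :=
  let := completionCStarAlgebra h
  ⟨Completion B, this,
    { (Completion.coeRingHom : B →+* Completion B) with
      commutes' := fun _ => rfl
      map_star' := fun a => (star_coe_completion a).symm },
    Completion.norm_coe⟩

theorem IsCstarSeminorm.exists_starAlgHom_norm_eq {A : Type u} [Ring A] [Algebra ℂ A] [StarRing A]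
    [StarModule ℂ A] {p : A → ℝ} (hp : IsCstarSeminorm p) :
    ∃ (D : Type u) (_ : CStarAlgebra D) (π : A →⋆ₐ[ℂ] D), ∀ x, ‖π x‖ = p x := by
  let := hp.toRingSeminorm.toSeminormedRing
  let : NormedAlgebra ℂ A := ⟨fun c x => (hp.2.1 c x).le⟩
  have : NormedStarGroup A := ⟨fun x => (hp.map_star x).le⟩
  exact exists_starAlgHom_norm_eq_norm hp.2.2.2.2

end Completion

section AlgebraicallyBounded

universe u

variable {B : Type u} [Ring B] [Algebra ℂ B] [StarRing B]

/-- An element `y` of a *-algebra is *algebraically bounded* if `y*y ≤ c` for some scalar `c`, in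
the order whose positive elements are the sums of hermitian squares. Such an element is bounded in
every C*-seminorm and in every representation by operators on a pre-Hilbert space. -/
def IsAlgebraicallyBounded (y : B) : Prop :=
  ∃ c : ℝ, 0 ≤ c ∧
    algebraMap ℂ B c - star y * y ∈ AddSubmonoid.closure (Set.range fun s : B => star s * s)

theorem isAlgebraicallyBounded_of_sum_star_mul_self {ι : Type*} [Fintype ι] {y : ι → B} {c : ℝ}
    (hc : 0 ≤ c) (hy : ∑ i, star (y i) * y i = algebraMap ℂ B c) (i : ι) :
    IsAlgebraicallyBounded (y i) := by
  classical
  refine ⟨c, hc, ?_⟩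
  rw [← hy, ← Finset.add_sum_erase _ _ (Finset.mem_univ i), add_sub_cancel_left]
  exact AddSubmonoid.sum_mem _ fun j _ => AddSubmonoid.subset_closure ⟨y j, rfl⟩

theorem map_nonneg_of_mem_closure_star_mul_self {D : Type*} [CStarAlgebra D] [PartialOrder D]
    [StarOrderedRing D] (π : B →⋆ₐ[ℂ] D) {x : B}
    (hx : x ∈ AddSubmonoid.closure (Set.range fun s : B => star s * s)) : 0 ≤ π x := by
  induction hx using AddSubmonoid.closure_induction with
  | mem x hx =>
    obtain ⟨s, rfl⟩ := hx
    rw [map_mul, map_star]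
    exact star_mul_self_nonneg _
  | zero => rw [map_zero]
  | add x y _ _ hx hy =>
    rw [map_add]
    exact add_nonneg hx hy

theorem IsAlgebraicallyBounded.exists_norm_starAlgHom_le {y : B} (hy : IsAlgebraicallyBounded y) :
    ∃ C : ℝ, ∀ (D : Type u) [CStarAlgebra D] (π : B →⋆ₐ[ℂ] D), ‖π y‖ ≤ C := by
  obtain ⟨c, hc, hmem⟩ := hy
  refine ⟨√c, fun D _ π => Real.le_sqrt_of_sq_le ?_⟩
  let := CStarAlgebra.spectralOrder D
  let := CStarAlgebra.spectralOrderedRing D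
  have hle : star (π y) * π y ≤ algebraMap ℂ D c := by
    have := map_nonneg_of_mem_closure_star_mul_self π hmem
    rwa [map_sub, AlgHomClass.commutes, map_mul, map_star, sub_nonneg] at this
  calc ‖π y‖ ^ 2 = ‖star (π y) * π y‖ := by rw [CStarRing.norm_star_mul_self, sq]
    _ ≤ ‖algebraMap ℂ D c‖ :=
      CStarAlgebra.norm_le_norm_of_nonneg_of_le (star_mul_self_nonneg _) hle
    _ ≤ ‖(c : ℂ)‖ * 1 := by
      rw [norm_algebraMap]
      gcongr
      nontriviality D
      exact CStarRing.norm_one.le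
    _ = c := by rw [mul_one, Complex.norm_of_nonneg hc]

theorem IsAlgebraicallyBounded.exists_isCstarSeminorm_le [StarModule ℂ B] {y : B}
    (hy : IsAlgebraicallyBounded y) : ∃ C : ℝ, ∀ p : B → ℝ, IsCstarSeminorm p → p y ≤ C := by
  obtain ⟨C, hC⟩ := hy.exists_norm_starAlgHom_le
  refine ⟨C, fun p hp => ?_⟩
  obtain ⟨D, _, π, hπ⟩ := hp.exists_starAlgHom_norm_eq
  exact hπ y ▸ hC D π

theorem exists_forall_seminorm_le_of_mem_span {𝕜 E ι : Type*} [NormedField 𝕜] [AddCommGroup E]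
    [Module 𝕜 E] (p : ι → Seminorm 𝕜 E) (r : ι → ℝ) {S : Set E}
    (hS : ∀ y ∈ S, ∃ C : ℝ, ∀ i, p i y ≤ C * r i) {x : E} (hx : x ∈ Submodule.span 𝕜 S) :
    ∃ C : ℝ, ∀ i, p i x ≤ C * r i := by
  induction hx using Submodule.span_induction with
  | mem y hy => exact hS y hy
  | zero => exact ⟨0, fun i => by rw [map_zero, zero_mul]⟩
  | add x y _ _ hx hy =>
    obtain ⟨C, hC⟩ := hx
    obtain ⟨D, hD⟩ := hy
    refine ⟨C + D, fun i => ?_⟩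
    rw [add_mul]
    exact (map_add_le_add (p i) x y).trans (add_le_add (hC i) (hD i))
  | smul c x _ hx =>
    obtain ⟨C, hC⟩ := hx
    refine ⟨‖c‖ * C, fun i => ?_⟩
    rw [map_smul_eq_mul, mul_assoc]
    exact mul_le_mul_of_nonneg_left (hC i) (norm_nonneg c)

theorem bddAbove_isCstarSeminorm [StarModule ℂ B]
    (hspan : Submodule.span ℂ {y : B | IsAlgebraicallyBounded y} = ⊤) (x : B) :
    BddAbove ((fun p : B → ℝ => p x) '' {p | IsCstarSeminorm p}) := by
  obtain ⟨C, hC⟩ := exists_forall_seminorm_le_of_mem_span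
    (fun p : {p : B → ℝ // IsCstarSeminorm p} => p.2.toSeminorm) (fun _ => 1)
    (fun y (hy : IsAlgebraicallyBounded y) =>
      hy.exists_isCstarSeminorm_le.imp fun C hC p => (mul_one C).symm ▸ hC p.1 p.2)
    (hspan ▸ Submodule.mem_top : x ∈ _)
  exact ⟨C, Set.forall_mem_image.mpr fun p hp => (hC ⟨p, hp⟩).trans_eq (mul_one C)⟩

end AlgebraicallyBounded

section PositiveFunctional

variable {B : Type*} [Ring B] [Algebra ℂ B] [StarRing B] {φ : B →ₗ[ℂ] ℂ}

/-- Positivity of a linear functional on a *-algebra, not assumed to be unital. -/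
def IsPositiveFunctional (φ : B →ₗ[ℂ] ℂ) : Prop :=
  ∀ x, 0 ≤ φ (star x * x)

/-- Faithfulness of a (positive) linear functional on a *-algebra: only `0` has norm `0` for the
sesquilinear form `⟨x, y⟩ = φ (x* y)`. -/
def IsFaithfulFunctional (φ : B →ₗ[ℂ] ℂ) : Prop :=
  ∀ x, φ (star x * x) = 0 → x = 0

/-- Orthonormality of a family for the sesquilinear form `⟨x, y⟩ = φ (x* y)`. -/
def OrthonormalFor {ι : Type*} [DecidableEq ι] (φ : B →ₗ[ℂ] ℂ) (z : ι → B) : Prop :=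
  ∀ i j, φ (star (z i) * z j) = if i = j then 1 else 0

theorem IsPositiveFunctional.map_nonneg_of_mem_closure (hφ : IsPositiveFunctional φ) {x : B}
    (hx : x ∈ AddSubmonoid.closure (Set.range fun s : B => star s * s)) (w : B) :
    0 ≤ φ (star w * x * w) := by
  induction hx using AddSubmonoid.closure_induction with
  | mem x hx =>
    obtain ⟨s, rfl⟩ := hx
    simpa only [star_mul, mul_assoc] using hφ (s * w)
  | zero => rw [mul_zero, zero_mul, map_zero]
  | add x y _ _ hx hy =>
    rw [mul_add, add_mul, map_add]
    exact add_nonneg hx hy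

variable [StarModule ℂ B]

-- Polarization: `φ ((x + y)* (x + y))` and `φ ((x + iy)* (x + iy))` are real.
theorem IsPositiveFunctional.map_star_mul (hφ : IsPositiveFunctional φ) (x y : B) :
    φ (star y * x) = star (φ (star x * y)) := by
  have hreal (z : B) : (φ (star z * z)).im = 0 := (hφ z).2.symm
  have hadd := hreal (x + y)
  have haddI := hreal (x + Complex.I • y)
  simp only [star_add, star_smul, add_mul, mul_add, smul_mul_assoc, mul_smul_comm, map_add,
    map_smul, smul_eq_mul, Complex.add_im, Complex.mul_im, Complex.mul_re, Complex.star_def,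
    Complex.conj_I, Complex.neg_re, Complex.neg_im, Complex.I_re, Complex.I_im, hreal]
    at hadd haddI
  refine Complex.ext ?_ ?_
  · rw [Complex.star_def, Complex.conj_re]
    linarith
  · rw [Complex.star_def, Complex.conj_im]
    linarith

/-- The semidefinite inner product `⟨x, y⟩ = φ (x* y)` of a positive functional. -/
@[reducible] def IsPositiveFunctional.preInnerCore (hφ : IsPositiveFunctional φ) :
    PreInnerProductSpace.Core ℂ B where
  inner x y := φ (star x * y)
  conj_inner_symm x y := (hφ.map_star_mul y x).symm
  re_inner_nonneg x := (hφ x).1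
  add_left x y z := by simp only [star_add, add_mul, map_add]
  smul_left x y c := by
    simp only [star_smul, smul_mul_assoc, map_smul, smul_eq_mul, starRingEnd_apply]

/-- The inner product `⟨x, y⟩ = φ (x* y)` of a faithful positive functional. -/
@[reducible] def IsPositiveFunctional.innerCore (hφ : IsPositiveFunctional φ)
    (hf : IsFaithfulFunctional φ) : InnerProductSpace.Core ℂ B where
  __ := hφ.preInnerCore
  definite x hx := hf x hx

theorem IsPositiveFunctional.map_mul_eq_zero (hφ : IsPositiveFunctional φ) {x : B}
    (hx : φ (star x * x) = 0) (y : B) : φ (y * x) = 0 := by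
  have hcs := InnerProductSpace.Core.inner_mul_inner_self_le (c := hφ.preInnerCore) (star y) x
  change ‖φ (star (star y) * x)‖ * ‖φ (star x * star y)‖ ≤
    (φ (star (star y) * star y)).re * (φ (star x * x)).re at hcs
  rw [hφ.map_star_mul (star y) x, norm_star, star_star, hx, Complex.zero_re, mul_zero] at hcs
  exact norm_eq_zero.mp (mul_self_eq_zero.mp (le_antisymm hcs (mul_self_nonneg _)))

theorem IsPositiveFunctional.exists_orthonormal_basis (hφ : IsPositiveFunctional φ)
    (hf : IsFaithfulFunctional φ) (V : Submodule ℂ B) [FiniteDimensional ℂ V] :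
    ∃ (n : ℕ) (z : Fin n → B), OrthonormalFor φ z ∧ (∀ i, z i ∈ V) ∧
      ∀ v ∈ V, ∑ i, φ (star (z i) * v) • z i = v := by
  let core := hφ.innerCore hf
  let : NormedAddCommGroup B := core.toNormedAddCommGroup
  let : InnerProductSpace ℂ B := InnerProductSpace.ofCore core.toCore
  let b := stdOrthonormalBasis ℂ V
  refine ⟨_, fun i => b i, orthonormal_iff_ite.mp b.orthonormal, fun i => (b i).2, fun v hv => ?_⟩
  have hrepr := congrArg V.subtype (b.sum_repr' ⟨v, hv⟩)
  rwa [map_sum] at hrepr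

theorem IsPositiveFunctional.exists_orthonormal_tmul_sum {M : Type*} [AddCommGroup M] [Module ℂ M]
    (hφ : IsPositiveFunctional φ) (hf : IsFaithfulFunctional φ) (t : B ⊗[ℂ] M) :
    ∃ (n : ℕ) (a : Fin n → B) (x : Fin n → M), OrthonormalFor φ a ∧ t = ∑ i, a i ⊗ₜ[ℂ] x i := by
  classical
  obtain ⟨S, hS⟩ := TensorProduct.exists_finset t
  obtain ⟨n, a, ha, -, hexpand⟩ :=
    hφ.exists_orthonormal_basis hf (Submodule.span ℂ (S.image Prod.fst : Set B))
  refine ⟨n, a, fun i => ∑ s ∈ S, φ (star (a i) * s.1) • s.2, ha, ?_⟩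
  calc t = ∑ s ∈ S, (∑ i, φ (star (a i) * s.1) • a i) ⊗ₜ[ℂ] s.2 := by
        rw [hS]
        refine Finset.sum_congr rfl fun s hs => ?_
        rw [hexpand s.1 (Submodule.subset_span (Finset.mem_image_of_mem _ hs))]
    _ = ∑ i, a i ⊗ₜ[ℂ] ∑ s ∈ S, φ (star (a i) * s.1) • s.2 := by
        simp only [TensorProduct.sum_tmul, TensorProduct.tmul_sum, TensorProduct.smul_tmul]
        exact Finset.sum_comm

end PositiveFunctional

section GNS

theorem opNorm_sq_le_of_inner_eq {𝕜 E : Type*} [RCLike 𝕜] [SeminormedAddCommGroup E]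
    [InnerProductSpace 𝕜 E] {S T : E →L[𝕜] E} (hST : ∀ v w, inner 𝕜 (T v) w = inner 𝕜 v (S w)) :
    ‖T‖ ^ 2 ≤ ‖S * T‖ := by
  refine (Real.le_sqrt (norm_nonneg _) (norm_nonneg _)).mp <|
    ContinuousLinearMap.opNorm_le_bound _ (Real.sqrt_nonneg _) fun v => ?_
  refine le_of_sq_le_sq ?_ (by positivity)
  calc ‖T v‖ ^ 2 = RCLike.re (inner 𝕜 v ((S * T) v)) := by
        rw [← inner_self_eq_norm_sq (𝕜 := 𝕜), hST, mul_apply_eq_comp]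
    _ ≤ ‖v‖ * ‖(S * T) v‖ := re_inner_le_norm _ _
    _ ≤ ‖v‖ * (‖S * T‖ * ‖v‖) := by
        gcongr
        exact ContinuousLinearMap.le_opNorm _ _
    _ = (√‖S * T‖ * ‖v‖) ^ 2 := by
        rw [mul_pow, Real.sq_sqrt (norm_nonneg _)]
        ring

theorem isCstarSeminorm_opNorm {B E : Type*} [Ring B] [Algebra ℂ B] [StarRing B]
    [SeminormedAddCommGroup E] [InnerProductSpace ℂ E] (π : B →ₐ[ℂ] (E →L[ℂ] E))
    (hπ : ∀ x v w, inner ℂ (π x v) w = inner ℂ v (π (star x) w)) :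
    IsCstarSeminorm fun x => ‖π x‖ := by
  have hmul (x y : B) : ‖π (x * y)‖ ≤ ‖π x‖ * ‖π y‖ := (congrArg _ (map_mul π x y)).trans_le
    (norm_mul_le _ _)
  have hsq (x : B) : ‖π x‖ ^ 2 ≤ ‖π (star x * x)‖ :=
    (opNorm_sq_le_of_inner_eq (hπ x)).trans_eq (congrArg _ (map_mul π _ x).symm)
  have hstar (x : B) : ‖π (star x)‖ ≤ ‖π x‖ := by
    simpa only [star_star] using le_star_of_sq_le (fun _ => norm_nonneg _) hmul hsq (star x)
  refine ⟨fun x => norm_nonneg _, fun c x => ?_, fun x y => ?_, hmul,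
    fun x => le_antisymm ?_ (hsq x)⟩
  · simp only [map_smul, norm_smul]
  · simp only [map_add]
    exact norm_add_le _ _
  · rw [sq]
    exact (hmul _ _).trans (mul_le_mul_of_nonneg_right (hstar x) (norm_nonneg _))

variable {B : Type*} [Ring B] [Algebra ℂ B] [StarRing B] {φ : B →ₗ[ℂ] ℂ}

theorem IsAlgebraicallyBounded.exists_map_star_mul_mul_le (hφ : IsPositiveFunctional φ) {y : B}
    (hy : IsAlgebraicallyBounded y) :
    ∃ c : ℝ, 0 ≤ c ∧ ∀ w, (φ (star (y * w) * (y * w))).re ≤ c * (φ (star w * w)).re := by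
  obtain ⟨c, hc, hmem⟩ := hy
  refine ⟨c, hc, fun w => ?_⟩
  have := (hφ.map_nonneg_of_mem_closure hmem w).1
  simp only [mul_sub, sub_mul, map_sub, Algebra.algebraMap_eq_smul_one, mul_smul_comm,
    smul_mul_assoc, mul_one, map_smul, smul_eq_mul, Complex.sub_re, Complex.re_ofReal_mul,
    Complex.zero_re, sub_nonneg] at this
  simpa only [star_mul, mul_assoc] using this

theorem exists_isCstarNorm [StarModule ℂ B] (hφ : IsPositiveFunctional φ)
    (hf : IsFaithfulFunctional φ)
    (hspan : Submodule.span ℂ {y : B | IsAlgebraicallyBounded y} = ⊤) :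
    ∃ N : B → ℝ, IsCstarNorm N := by
  let core := hφ.innerCore hf
  let : NormedAddCommGroup B := core.toNormedAddCommGroup
  let : InnerProductSpace ℂ B := InnerProductSpace.ofCore core.toCore
  have hnorm (w : B) : ‖w‖ = √(φ (star w * w)).re := rfl
  have hbdd (x : B) : ∃ C : ℝ, ∀ w, ‖LinearMap.mul ℂ B x w‖ ≤ C * ‖w‖ := by
    refine exists_forall_seminorm_le_of_mem_span
      (fun w => (normSeminorm ℂ B).comp (LinearMap.mulRight ℂ w)) (fun w => ‖w‖)
      (fun y (hy : IsAlgebraicallyBounded y) => ?_) (hspan ▸ Submodule.mem_top : x ∈ _)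
    obtain ⟨c, hc, hle⟩ := hy.exists_map_star_mul_mul_le hφ
    refine ⟨√c, fun w => ?_⟩
    rw [hnorm, ← Real.sqrt_mul hc]
    exact Real.sqrt_le_sqrt (hle w)
  let π : B →ₐ[ℂ] (B →L[ℂ] B) := AlgHom.ofLinearMap
    { toFun := fun x => (LinearMap.mul ℂ B x).mkContinuousOfExistsBound (hbdd x)
      map_add' := fun x y => ContinuousLinearMap.ext fun w => add_mul x y w
      map_smul' := fun c x => ContinuousLinearMap.ext fun w => smul_mul_assoc c x w }
    (ContinuousLinearMap.ext one_mul) (fun x y => ContinuousLinearMap.ext (mul_assoc x y))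
  refine ⟨fun x => ‖π x‖, isCstarSeminorm_opNorm π fun x v w => ?_, fun x hx => ?_⟩
  · change φ (star (x * v) * w) = φ (star v * (star x * w))
    rw [star_mul, mul_assoc]
  · rw [← mul_one x]
    exact DFunLike.congr_fun (norm_eq_zero.mp hx) 1

end GNS

section Slices

variable {R M N P Q : Type*} [CommSemiring R] [AddCommMonoid M] [Module R M] [AddCommMonoid N]
  [Module R N] [AddCommMonoid P] [Module R P] [AddCommMonoid Q] [Module R Q]

/-- The slice map `f ⊗ id` of a functional on the left leg. -/
noncomputable def leftSlice (f : M →ₗ[R] R) : M ⊗[R] N →ₗ[R] N :=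
  (TensorProduct.lid R N).toLinearMap ∘ₗ f.rTensor N

/-- The slice map `id ⊗ g` of a functional on the right leg. -/
noncomputable def rightSlice (g : N →ₗ[R] R) : M ⊗[R] N →ₗ[R] M :=
  (TensorProduct.rid R M).toLinearMap ∘ₗ g.lTensor M

@[simp]
theorem leftSlice_tmul (f : M →ₗ[R] R) (m : M) (n : N) : leftSlice f (m ⊗ₜ[R] n) = f m • n :=
  rfl

@[simp]
theorem rightSlice_tmul (g : N →ₗ[R] R) (m : M) (n : N) : rightSlice g (m ⊗ₜ[R] n) = g n • m :=
  rfl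

theorem leftSlice_lTensor (f : M →ₗ[R] R) (h : N →ₗ[R] P) (t : M ⊗[R] N) :
    leftSlice f (h.lTensor M t) = h (leftSlice f t) := by
  refine LinearMap.congr_fun (?_ : leftSlice f ∘ₗ h.lTensor M = h ∘ₗ leftSlice f) t
  ext m n
  simp

theorem rightSlice_rTensor (g : N →ₗ[R] R) (h : M →ₗ[R] P) (t : M ⊗[R] N) :
    rightSlice g (h.rTensor N t) = h (rightSlice g t) := by
  refine LinearMap.congr_fun (?_ : rightSlice g ∘ₗ h.rTensor N = h ∘ₗ rightSlice g) t
  ext m n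
  simp

theorem leftSlice_assoc (f : M →ₗ[R] R) (t : (M ⊗[R] N) ⊗[R] P) :
    leftSlice f (TensorProduct.assoc R M N P t) = (leftSlice f).rTensor P t := by
  refine LinearMap.congr_fun (?_ : leftSlice f ∘ₗ (TensorProduct.assoc R M N P).toLinearMap =
    (leftSlice f).rTensor P) t
  ext m n p
  simp [TensorProduct.smul_tmul']

theorem lTensor_rightSlice_assoc (g : P →ₗ[R] R) (t : (M ⊗[R] N) ⊗[R] P) :
    (rightSlice g).lTensor M (TensorProduct.assoc R M N P t) = rightSlice g t := by
  refine LinearMap.congr_fun (?_ : (rightSlice g).lTensor M ∘ₗ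
    (TensorProduct.assoc R M N P).toLinearMap = rightSlice g) t
  ext m n p
  simp

theorem sum_rightSlice_tmul {V : Submodule R N} {ι : Type*} [Fintype ι] {z : ι → N}
    {ν : ι → N →ₗ[R] R} (hν : ∀ v ∈ V, ∑ i, ν i v • z i = v) {t : M ⊗[R] N}
    (ht : t ∈ LinearMap.range (V.subtype.lTensor M)) :
    ∑ i, rightSlice (ν i) t ⊗ₜ[R] z i = t := by
  obtain ⟨t, rfl⟩ := ht
  induction t using TensorProduct.induction_on with
  | zero => simp
  | tmul m v =>
    simp only [LinearMap.lTensor_tmul, Submodule.subtype_apply, rightSlice_tmul,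
      TensorProduct.smul_tmul, ← TensorProduct.tmul_sum, hν v v.2]
  | add s t hs ht => simp only [map_add, TensorProduct.add_tmul, Finset.sum_add_distrib, hs, ht]

end Slices

section RightLegs

variable {K M N : Type*} [Field K] [AddCommGroup M] [Module K M] [AddCommGroup N] [Module K N]

/-- The span of the right legs of a tensor `t`: the smallest subspace `V` with `t ∈ M ⊗ V`. -/
def rightLegs (t : M ⊗[K] N) : Submodule K N :=
  Submodule.span K (Set.range fun f : M →ₗ[K] K => leftSlice f t)

instance finiteDimensional_rightLegs (t : M ⊗[K] N) : FiniteDimensional K (rightLegs t) := by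
  obtain ⟨S, hS⟩ := TensorProduct.exists_finset t
  have hfin := FiniteDimensional.span_of_finite K (S.finite_toSet.image Prod.snd)
  refine Submodule.finiteDimensional_of_le (S₂ := Submodule.span K (Prod.snd '' (S : Set (M × N))))
    (Submodule.span_le.mpr ?_)
  rintro _ ⟨f, rfl⟩
  simp only [hS, map_sum, leftSlice_tmul]
  exact Submodule.sum_mem _ fun s hs =>
    Submodule.smul_mem _ _ (Submodule.subset_span (Set.mem_image_of_mem _ hs))

theorem mem_range_lTensor_rightLegs (t : M ⊗[K] N) :
    t ∈ LinearMap.range ((rightLegs t).subtype.lTensor M) := by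
  classical
  let b := Module.Basis.ofVectorSpace K M
  let e := TensorProduct.equivFinsuppOfBasisLeft (N := N) b
  have hmem (i) : e t i ∈ rightLegs t :=
    Submodule.subset_span ⟨b.coord i, (TensorProduct.equivFinsuppOfBasisLeft_apply b t i).symm⟩
  have ht : ∑ i ∈ (e t).support, b i ⊗ₜ[K] e t i = t :=
    (TensorProduct.equivFinsuppOfBasisLeft_symm_apply b (e t)).symm.trans (e.symm_apply_apply t)
  exact ⟨∑ i ∈ (e t).support, b i ⊗ₜ[K] ⟨e t i, hmem i⟩, (map_sum _ _ _).trans ht⟩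

end RightLegs

section Comodule

/-- A left coaction of a coalgebra `A` on a module `V`. -/
structure IsLeftCoaction {R A V : Type*} [CommSemiring R] [AddCommMonoid A] [Module R A]
    [Coalgebra R A] [AddCommMonoid V] [Module R V] (α : V →ₗ[R] A ⊗[R] V) : Prop where
  coassoc : ∀ v, TensorProduct.assoc R A A V (Coalgebra.comul.rTensor V (α v)) = α.lTensor A (α v)
  leftSlice_counit : ∀ v, leftSlice Coalgebra.counit (α v) = v

/-- A matrix over a coalgebra with `Δ(Uᵢₖ) = ∑ⱼ Uᵢⱼ ⊗ Uⱼₖ`. The counit condition `ε(U) = 1` is not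
imposed. -/
def IsMatrixCorepresentation (R : Type*) {A n : Type*} [CommSemiring R] [AddCommMonoid A]
    [Module R A] [Coalgebra R A] [Fintype n] (U : Matrix n n A) : Prop :=
  ∀ i k, Coalgebra.comul (R := R) (U i k) = ∑ j, U i j ⊗ₜ[R] U j k

theorem IsLeftCoaction.apply_leftSlice {R A V : Type*} [CommSemiring R] [AddCommMonoid A]
    [Module R A] [Coalgebra R A] [AddCommMonoid V] [Module R V] {α : V →ₗ[R] A ⊗[R] V}
    (hα : IsLeftCoaction α) (f : A →ₗ[R] R) (v : V) :
    α (leftSlice f (α v)) = (leftSlice f ∘ₗ Coalgebra.comul).rTensor V (α v) := by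
  rw [← leftSlice_lTensor, ← hα.coassoc, leftSlice_assoc, LinearMap.rTensor_comp_apply]

theorem IsLeftCoaction.exists_finiteDimensional_subcomodule {K A V : Type*} [Field K]
    [AddCommGroup A] [Module K A] [Coalgebra K A] [AddCommGroup V] [Module K V]
    {α : V →ₗ[K] A ⊗[K] V} (hα : IsLeftCoaction α) (v : V) :
    ∃ W : Submodule K V, FiniteDimensional K W ∧ v ∈ W ∧
      ∀ w ∈ W, α w ∈ LinearMap.range (W.subtype.lTensor A) := by
  refine ⟨rightLegs (α v), inferInstance,
    Submodule.subset_span ⟨Coalgebra.counit, hα.leftSlice_counit v⟩, ?_⟩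
  obtain ⟨t, ht⟩ := mem_range_lTensor_rightLegs (α v)
  refine fun w hw => (Submodule.span_le (p := (LinearMap.range _).comap α)).mpr ?_ hw
  rintro _ ⟨f, rfl⟩
  refine ⟨(leftSlice f ∘ₗ Coalgebra.comul).rTensor _ t, ?_⟩
  rw [hα.apply_leftSlice]
  conv_rhs => rw [← ht]
  rw [← LinearMap.comp_apply, ← LinearMap.comp_apply, LinearMap.lTensor_comp_rTensor,
    LinearMap.rTensor_comp_lTensor]

theorem IsLeftCoaction.isMatrixCorepresentation {R A V n : Type*} [CommSemiring R]
    [AddCommMonoid A] [Module R A] [Coalgebra R A] [AddCommMonoid V] [Module R V] [Fintype n]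
    [DecidableEq n] {α : V →ₗ[R] A ⊗[R] V} (hα : IsLeftCoaction α) {y : n → V} {W : Matrix n n A}
    (hW : ∀ i, α (y i) = ∑ j, W i j ⊗ₜ[R] y j) {ν : n → V →ₗ[R] R}
    (hν : ∀ j k, ν k (y j) = if j = k then 1 else 0) : IsMatrixCorepresentation R W := by
  have hcoeff (i k) : rightSlice (ν k) (α (y i)) = W i k := by
    simp [hW, hν]
  intro i k
  calc Coalgebra.comul (W i k)
      = rightSlice (ν k) (Coalgebra.comul.rTensor V (α (y i))) := by
        rw [rightSlice_rTensor, hcoeff]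
    _ = (rightSlice (ν k)).lTensor A (α.lTensor A (α (y i))) := by
        rw [← hα.coassoc, lTensor_rightSlice_assoc]
    _ = ∑ j, W i j ⊗ₜ[R] W j k := by
        rw [hW]
        simp only [map_sum, LinearMap.lTensor_tmul, hcoeff]

-- With `E = ε(U)`, the antipode gives `S(U) U = E` while `E U = U`, so `E = E U T = 1` and the
-- right inverse `T` agrees with the left inverse `S(U)`.
theorem IsMatrixCorepresentation.mul_eq_one_comm {R A n : Type*} [CommSemiring R] [Semiring A]
    [HopfAlgebra R A] [Fintype n] [DecidableEq n] {U T : Matrix n n A}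
    (hU : IsMatrixCorepresentation R U) (hUT : U * T = 1) : T * U = 1 := by
  let E : Matrix n n A := U.map fun a => algebraMap R A (Coalgebra.counit a)
  have hSU : U.map (HopfAlgebra.antipode R) * U = E := by
    ext i k
    have := HopfAlgebra.mul_antipode_rTensor_comul_apply (R := R) (U i k)
    rw [hU] at this
    simpa [E, Matrix.mul_apply] using this
  have hEU : E * U = U := by
    ext i k
    have := congrArg (TensorProduct.lid R A) (Coalgebra.rTensor_counit_comul (R := R) (U i k))
    rw [hU] at this
    simpa [E, Matrix.mul_apply, Algebra.smul_def] using this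
  have hE : E = 1 := by rw [← mul_one E, ← hUT, ← mul_assoc, hEU]
  rw [hE] at hSU
  rw [← left_inv_eq_right_inv hSU hUT, hSU]

end Comodule

section GaloisMap

variable {R A Z : Type*} [CommSemiring R] [Semiring A] [Algebra R A] [Semiring Z] [Algebra R Z]
  {α : Z →ₐ[R] A ⊗[R] Z}

/-- The Galois (or canonical) map `Z ⊗ Z → A ⊗ Z`, `p ⊗ q ↦ α(p) (1 ⊗ q)`, of a coaction `α`. -/
noncomputable def galoisMap (α : Z →ₐ[R] A ⊗[R] Z) : Z ⊗[R] Z →ₗ[R] A ⊗[R] Z :=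
  (TensorProduct.map LinearMap.id (LinearMap.mul' R Z)) ∘ₗ
    (TensorProduct.assoc R A Z Z).toLinearMap ∘ₗ (TensorProduct.map α.toLinearMap LinearMap.id)

theorem galoisMap_tmul (p q : Z) : galoisMap α (p ⊗ₜ[R] q) = α p * ((1 : A) ⊗ₜ[R] q) := by
  simp only [galoisMap, LinearMap.comp_apply, TensorProduct.map_tmul, LinearMap.id_apply,
    AlgHom.toLinearMap_apply]
  induction α p using TensorProduct.induction_on with
  | zero => simp
  | tmul a z => simp
  | add s t hs ht => rw [TensorProduct.add_tmul, map_add, map_add, hs, ht, add_mul]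

theorem galoisMap_mul (t : Z ⊗[R] Z) (q : Z) :
    galoisMap α (t * ((1 : Z) ⊗ₜ[R] q)) = galoisMap α t * ((1 : A) ⊗ₜ[R] q) := by
  induction t using TensorProduct.induction_on with
  | zero => simp
  | tmul p q => simp [galoisMap_tmul, mul_assoc]
  | add s t hs ht => rw [add_mul, map_add, hs, ht, map_add, add_mul]

theorem eq_smul_one_of_coinvariant (hinj : Function.Injective (galoisMap α)) {μ : Z →ₗ[R] R}
    (hμ1 : μ 1 = 1) {w : Z} (hw : α w = 1 ⊗ₜ[R] w) : w = μ w • (1 : Z) := by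
  have hswap : w ⊗ₜ[R] (1 : Z) = (1 : Z) ⊗ₜ[R] w := by
    apply hinj
    rw [galoisMap_tmul, galoisMap_tmul, hw, map_one, one_mul, ← Algebra.TensorProduct.one_def,
      mul_one]
  simpa [hμ1] using congrArg (rightSlice μ) hswap

theorem exists_tmul_one_eq_sum_mul (hbij : Function.Bijective (galoisMap α)) {ι : Type*}
    [Fintype ι] {z : Z} {a : ι → A} {x : ι → Z} (hz : α z = ∑ i, a i ⊗ₜ[R] x i) :
    ∃ k : ι → Z ⊗[R] Z, z ⊗ₜ[R] (1 : Z) = ∑ i, k i * ((1 : Z) ⊗ₜ[R] x i) := by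
  choose k hk using fun i => hbij.2 (a i ⊗ₜ[R] (1 : Z))
  refine ⟨k, hbij.1 ?_⟩
  simp only [galoisMap_tmul, hz, map_sum, galoisMap_mul, hk, ← Algebra.TensorProduct.one_def,
    mul_one, Algebra.TensorProduct.tmul_mul_tmul, one_mul]

end GaloisMap

section InvariantFunctional

/-- Invariance of a functional `μ` under a left coaction: `(id ⊗ μ) α(z) = μ(z) 1`. With `μ 1 = 1`
this is a Haar measure. -/
def IsInvariantFunctional {R A Z : Type*} [CommSemiring R] [Semiring A] [Algebra R A]
    [AddCommMonoid Z] [Module R Z] (α : Z →ₗ[R] A ⊗[R] Z) (μ : Z →ₗ[R] R) : Prop :=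
  ∀ z, rightSlice μ (α z) = algebraMap R A (μ z)

variable {A Z : Type*} [Ring A] [StarRing A] [Ring Z] [StarRing Z] [Algebra ℂ Z] [StarModule ℂ Z]
  {μ : Z →ₗ[ℂ] ℂ}

theorem IsPositiveFunctional.eq_zero_of_tmul_one_eq_sum (hμ : IsPositiveFunctional μ)
    (hμ1 : μ 1 = 1) {ι : Type*} [Fintype ι] {z : Z} {x : ι → Z} (hx : ∀ i, μ (star (x i) * x i) = 0)
    {k : ι → Z ⊗[ℂ] Z} (hz : z ⊗ₜ[ℂ] (1 : Z) = ∑ i, k i * ((1 : Z) ⊗ₜ[ℂ] x i)) : z = 0 := by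
  have hslice (i) (t : Z ⊗[ℂ] Z) : rightSlice μ (t * ((1 : Z) ⊗ₜ[ℂ] x i)) = 0 := by
    induction t using TensorProduct.induction_on with
    | zero => simp
    | tmul p q => simp [hμ.map_mul_eq_zero (hx i)]
    | add s t hs ht => rw [add_mul, map_add, hs, ht, add_zero]
  simpa [hμ1, hslice] using congrArg (rightSlice μ) hz

variable [Algebra ℂ A] [StarModule ℂ A] {α : Z →ₐ[ℂ] A ⊗[ℂ] Z}

theorem apply_star_eq_sum (hstar : ∀ z, α (star z) = star (α z)) {ι : Type*} [Fintype ι] {z : Z}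
    {a : ι → A} {x : ι → Z} (hz : α z = ∑ i, a i ⊗ₜ[ℂ] x i) :
    α (star z) = ∑ i, star (a i) ⊗ₜ[ℂ] star (x i) := by
  rw [hstar, hz, star_sum]
  simp only [TensorProduct.star_tmul]

-- The hermitian square of `α z = ∑ aᵢ ⊗ xᵢ` under `J ⊗ μ`, computed by invariance and by
-- orthonormality.
theorem IsInvariantFunctional.sum_map_star_mul_self (hμ : IsInvariantFunctional α.toLinearMap μ)
    (hstar : ∀ z, α (star z) = star (α z)) {J : A →ₗ[ℂ] ℂ} {ι : Type*} [Fintype ι] [DecidableEq ι]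
    {z : Z} {a : ι → A} {x : ι → Z} (ha : OrthonormalFor J a) (hz : α z = ∑ i, a i ⊗ₜ[ℂ] x i) :
    ∑ i, μ (star (x i) * x i) = μ (star z * z) * J 1 := by
  have hinv := congrArg J (hμ (star z * z))
  rw [AlgHom.toLinearMap_apply, map_mul, apply_star_eq_sum hstar hz, hz, Finset.sum_mul_sum] at hinv
  simpa [ha _ _, Algebra.algebraMap_eq_smul_one] using hinv

theorem IsInvariantFunctional.isFaithfulFunctional (hμ : IsInvariantFunctional α.toLinearMap μ)
    (hμ1 : μ 1 = 1) (hμpos : IsPositiveFunctional μ) (hstar : ∀ z, α (star z) = star (α z))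
    (hbij : Function.Bijective (galoisMap α)) {J : A →ₗ[ℂ] ℂ} (hJ : IsPositiveFunctional J)
    (hJf : IsFaithfulFunctional J) : IsFaithfulFunctional μ := by
  intro z hz
  obtain ⟨n, a, x, ha, hα⟩ := hJ.exists_orthonormal_tmul_sum hJf (α z)
  have hsum := hμ.sum_map_star_mul_self hstar ha hα
  rw [hz, zero_mul, Finset.sum_eq_zero_iff_of_nonneg fun i _ => hμpos (x i)] at hsum
  obtain ⟨k, hk⟩ := exists_tmul_one_eq_sum_mul hbij hα
  exact hμpos.eq_zero_of_tmul_one_eq_sum hμ1 (fun i => hsum i (Finset.mem_univ i)) hk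

variable {n : Type*} [Fintype n] [DecidableEq n] {y : n → Z} {W : Matrix n n A}

theorem IsInvariantFunctional.mul_conjTranspose_eq_one
    (hμ : IsInvariantFunctional α.toLinearMap μ) (hstar : ∀ z, α (star z) = star (α z))
    (hy : OrthonormalFor μ (star y)) (hW : ∀ i, α (y i) = ∑ j, W i j ⊗ₜ[ℂ] y j) :
    W * W.conjTranspose = 1 := by
  ext i k
  have hon (j l) : μ (y j * star (y l)) = if j = l then 1 else 0 := by
    simpa using hy j l
  have hinv := hμ (y i * star (y k))
  rw [AlgHom.toLinearMap_apply, map_mul, apply_star_eq_sum hstar (hW k), hW i,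
    Finset.sum_mul_sum] at hinv
  simpa [hon, Matrix.mul_apply, Matrix.one_apply, apply_ite] using hinv

theorem coinvariant_sum_star_mul_self (hstar : ∀ z, α (star z) = star (α z))
    (hW : ∀ i, α (y i) = ∑ j, W i j ⊗ₜ[ℂ] y j) (hunit : W.conjTranspose * W = 1) :
    α (∑ i, star (y i) * y i) = 1 ⊗ₜ[ℂ] ∑ i, star (y i) * y i := by
  have hcol (j k) : ∑ i, star (W i j) * W i k = if j = k then 1 else 0 := by
    simpa [Matrix.mul_apply, Matrix.one_apply] using congrFun (congrFun hunit j) k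
  calc α (∑ i, star (y i) * y i)
      = ∑ i, ∑ j, ∑ k, (star (W i j) * W i k) ⊗ₜ[ℂ] (star (y j) * y k) := by
        simp only [map_sum, map_mul, apply_star_eq_sum hstar (hW _), hW, Finset.sum_mul_sum,
          Algebra.TensorProduct.tmul_mul_tmul]
    _ = ∑ j, ∑ k, (∑ i, star (W i j) * W i k) ⊗ₜ[ℂ] (star (y j) * y k) := by
        simp only [TensorProduct.sum_tmul]
        rw [Finset.sum_comm]
        exact Finset.sum_congr rfl fun j _ => Finset.sum_comm
    _ = 1 ⊗ₜ[ℂ] ∑ i, star (y i) * y i := by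
        simp [hcol, TensorProduct.tmul_sum, TensorProduct.ite_tmul]

end InvariantFunctional

section GaloisExtension

variable {A Z : Type*} [Ring A] [HopfAlgebra ℂ A] [StarRing A] [StarModule ℂ A] [Ring Z]
  [Algebra ℂ Z] [StarRing Z] [StarModule ℂ Z] {α : Z →ₐ[ℂ] A ⊗[ℂ] Z} {μ : Z →ₗ[ℂ] ℂ}

theorem isAlgebraicallyBounded_of_orthonormal (hα : IsLeftCoaction α.toLinearMap)
    (hstar : ∀ z, α (star z) = star (α z)) (hinj : Function.Injective (galoisMap α))
    (hμ : IsInvariantFunctional α.toLinearMap μ) (hμ1 : μ 1 = 1) (hμpos : IsPositiveFunctional μ)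
    {n : Type*} [Fintype n] [DecidableEq n] {y : n → Z} (hy : OrthonormalFor μ (star y))
    {W : Matrix n n A} (hW : ∀ i, α (y i) = ∑ j, W i j ⊗ₜ[ℂ] y j) (i : n) :
    IsAlgebraicallyBounded (y i) := by
  have hcorep : IsMatrixCorepresentation ℂ W :=
    hα.isMatrixCorepresentation hW (ν := fun k => μ ∘ₗ LinearMap.mulRight ℂ (star (y k)))
      fun j k => by simpa using hy j k
  have hunit : W.conjTranspose * W = 1 :=
    hcorep.mul_eq_one_comm (hμ.mul_conjTranspose_eq_one hstar hy hW)
  have hscalar := eq_smul_one_of_coinvariant hinj hμ1 (coinvariant_sum_star_mul_self hstar hW hunit)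
  have hnonneg : 0 ≤ μ (∑ i, star (y i) * y i) := by
    rw [map_sum]
    exact Finset.sum_nonneg fun i _ => hμpos (y i)
  refine isAlgebraicallyBounded_of_sum_star_mul_self (Complex.nonneg_iff.mp hnonneg).1 ?_ i
  rw [← Complex.eq_re_of_ofReal_le hnonneg, Algebra.algebraMap_eq_smul_one]
  exact hscalar

theorem span_isAlgebraicallyBounded_eq_top (hα : IsLeftCoaction α.toLinearMap)
    (hstar : ∀ z, α (star z) = star (α z)) (hinj : Function.Injective (galoisMap α))
    (hμ : IsInvariantFunctional α.toLinearMap μ) (hμ1 : μ 1 = 1) (hμpos : IsPositiveFunctional μ)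
    (hμf : IsFaithfulFunctional μ) :
    Submodule.span ℂ {y : Z | IsAlgebraicallyBounded y} = ⊤ := by
  refine Submodule.eq_top_iff'.mpr fun x => ?_
  obtain ⟨V, _, hxV, hV⟩ := hα.exists_finiteDimensional_subcomodule (star x)
  obtain ⟨n, z, hz, hzV, hexpand⟩ := hμpos.exists_orthonormal_basis hμf V
  let ν (j : Fin n) : Z →ₗ[ℂ] ℂ := μ ∘ₗ LinearMap.mulLeft ℂ (star (z j))
  have hcoeff (i) : α (z i) = ∑ j, rightSlice (ν j) (α (z i)) ⊗ₜ[ℂ] z j :=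
    (sum_rightSlice_tmul hexpand (hV _ (hzV i))).symm
  have hbounded : ∀ i, IsAlgebraicallyBounded (star (z i)) :=
    isAlgebraicallyBounded_of_orthonormal hα hstar hinj hμ hμ1 hμpos (y := star z)
      (by rwa [star_star]) (W := fun i j => star (rightSlice (ν j) (α (z i))))
      fun i => apply_star_eq_sum hstar (hcoeff i)
  have hx : x = ∑ i, star (μ (star (z i) * star x)) • star (z i) := by
    simpa only [star_star, star_sum, star_smul] using (congrArg star (hexpand _ hxV)).symm
  rw [hx]
  exact Submodule.sum_mem _ fun i _ => Submodule.smul_mem _ _ (Submodule.subset_span (hbounded i))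

theorem star_Galois_extension_has_Cstar_norm_general (hα : IsLeftCoaction α.toLinearMap)
    (hstar : ∀ z, α (star z) = star (α z)) (hGalois : Function.Bijective (galoisMap α))
    {J : A →ₗ[ℂ] ℂ} (hJpos : IsPositiveFunctional J) (hJf : IsFaithfulFunctional J)
    (hμ : IsInvariantFunctional α.toLinearMap μ) (hμ1 : μ 1 = 1) (hμpos : IsPositiveFunctional μ) :
    (∃ N : Z → ℝ, IsCstarNorm N) ∧
    (∀ z : Z, BddAbove ((fun p : Z → ℝ => p z) '' {p : Z → ℝ | IsCstarSeminorm p})) ∧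
    IsCstarNorm fun z : Z =>
      sSup ((fun p : Z → ℝ => p z) '' {p : Z → ℝ | IsCstarSeminorm p}) := by
  have hμf : IsFaithfulFunctional μ :=
    hμ.isFaithfulFunctional hμ1 hμpos hstar hGalois hJpos hJf
  have hspan : Submodule.span ℂ {y : Z | IsAlgebraicallyBounded y} = ⊤ :=
    span_isAlgebraicallyBounded_eq_top hα hstar hGalois.injective hμ hμ1 hμpos hμf
  have hN : ∃ N : Z → ℝ, IsCstarNorm N := exists_isCstarNorm hμpos hμf hspan
  have hbdd := bddAbove_isCstarSeminorm hspan
  exact ⟨hN, hbdd, isCstarNorm_sSup hN hbdd⟩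

end GaloisExtension

/-- Let `A` be a Hopf *-algebra over `ℂ` (the comultiplication is a
*-homomorphism, where the star on `A ⊗ A` is `(a ⊗ b)* = a* ⊗ b*`) admitting a
positive faithful Haar measure `J`.  Let `Z` be an `A`-*-Galois extension and
let `μ` be a positive Haar measure on `Z`.  Then there exists a C*-norm on
`Z`, for every `z ∈ Z` the supremum of `p(z)` over all C*-seminorms `p` on `Z`
is finite, and this supremum is itself a C*-norm on `Z`. -/
theorem star_Galois_extension_has_Cstar_norm
    (A : Type) [Ring A] [HopfAlgebra ℂ A] [StarRing A]
    -- the star on `A ⊗ A`, as the (unique) additive map with `(a ⊗ b)* = a* ⊗ b*`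
    (SA : A ⊗[ℂ] A → A ⊗[ℂ] A)
    (hSAadd : ∀ u v, SA (u + v) = SA u + SA v)
    (hSAtmul : ∀ a b : A, SA (a ⊗ₜ[ℂ] b) = star a ⊗ₜ[ℂ] star b)
    -- the comultiplication is a *-homomorphism
    (hcomul_star : ∀ a : A,
      Coalgebra.comul (R := ℂ) (star a) = SA (Coalgebra.comul (R := ℂ) a))
    -- a positive faithful Haar measure on `A`
    (J : A →ₗ[ℂ] ℂ) (hJ1 : J 1 = 1)
    (hJinv : ∀ a : A,
      (TensorProduct.rid ℂ A)
          (TensorProduct.map (LinearMap.id (M := A)) J (Coalgebra.comul (R := ℂ) a)) =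
        algebraMap ℂ A (J a))
    (hJpos : ∀ a : A, 0 ≤ J (star a * a))
    (hJfaithful : ∀ a : A, a ≠ 0 → 0 < J (star a * a))
    -- `Z` is an `A`-*-Galois extension
    (Z : Type) [Ring Z] [Algebra ℂ Z] [StarRing Z] [Nontrivial Z]
    (αZ : Z →ₐ[ℂ] A ⊗[ℂ] Z)
    (hcoassoc :
      (TensorProduct.assoc ℂ A A Z).toLinearMap ∘ₗ
          (TensorProduct.map (Coalgebra.comul (R := ℂ) (A := A)) (LinearMap.id (M := Z))) ∘ₗ
          αZ.toLinearMap =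
        (TensorProduct.map (LinearMap.id (M := A)) αZ.toLinearMap) ∘ₗ αZ.toLinearMap)
    (hcounit :
      (TensorProduct.lid ℂ Z).toLinearMap ∘ₗ
          (TensorProduct.map (Coalgebra.counit (R := ℂ) (A := A)) (LinearMap.id (M := Z))) ∘ₗ
          αZ.toLinearMap =
        LinearMap.id)
    (hGalois :
      Function.Bijective
        ((TensorProduct.map LinearMap.id (LinearMap.mul' ℂ Z)) ∘ₗ
          (TensorProduct.assoc ℂ A Z Z).toLinearMap ∘ₗ
          (TensorProduct.map αZ.toLinearMap LinearMap.id)))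
    -- the star on `A ⊗ Z`, and `α_Z` is a *-homomorphism
    (SZ : A ⊗[ℂ] Z → A ⊗[ℂ] Z)
    (hSZadd : ∀ u v, SZ (u + v) = SZ u + SZ v)
    (hSZtmul : ∀ (a : A) (z : Z), SZ (a ⊗ₜ[ℂ] z) = star a ⊗ₜ[ℂ] star z)
    (hαZstar : ∀ z : Z, αZ (star z) = SZ (αZ z))
    -- a positive Haar measure `μ` on `Z`
    (μ : Z →ₗ[ℂ] ℂ) (hμ1 : μ 1 = 1)
    (hμinv : ∀ z : Z,
      (TensorProduct.rid ℂ A)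
          (TensorProduct.map (LinearMap.id (M := A)) μ (αZ z)) =
        algebraMap ℂ A (μ z))
    (hμpos : ∀ z : Z, 0 ≤ μ (star z * z)) :
    -- then `Z` carries a C*-norm, every element has a finite supremum of
    -- C*-seminorms, and this supremum is itself a C*-norm
    (∃ N : Z → ℝ, IsCstarNorm N) ∧
    (∀ z : Z, BddAbove ((fun p : Z → ℝ => p z) '' {p : Z → ℝ | IsCstarSeminorm p})) ∧
    IsCstarNorm (fun z : Z => sSup ((fun p : Z → ℝ => p z) '' {p : Z → ℝ | IsCstarSeminorm p})) := by
  have := starModule_of_star_tmul_self SA hSAtmul J hJ1 hJpos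
  have := starModule_of_star_tmul SZ hSZtmul J hJ1
  have hJf : IsFaithfulFunctional J := fun a ha => by_contra fun hne => (hJfaithful a hne).ne' ha
  exact star_Galois_extension_has_Cstar_norm_general
    ⟨LinearMap.congr_fun hcoassoc, LinearMap.congr_fun hcounit⟩
    (fun z => (hαZstar z).trans (eq_star_of_star_tmul SZ hSZadd hSZtmul (αZ z)))
    hGalois hJpos hJf hμinv hμ1 hμpos
end
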